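/- arXiv:2502.16096 — 2 statements merged into one kernel-verified Lean document; each statement's English description precedes it below -/
import Mathlib

section
/- Let H be a labeled contraction of a graph G, and let W be a witness structure of G into H. Let R ⊆ E(G) be a matching of G such that for every edge xy ∈ R, the vertices x and y lie in the same witness set of W. Let G' be the graph obtained from G by contracting every edge of R in such a way that no representative vertex of W (i.e., no vertex of V(H)) is removed. Then H is a labeled contraction of G'. -/
/-!
A witness structure is the same thing as its representative map `f`, which sends a vertex of `G`
to the vertex of `H` lying in the same witness set (`IsWitnessStructure.exists_isRepMap`).

Contracting an edge `uv` with `f u = f v` and `v ∉ V(H)` only merges `v` into a vertex with the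
same representative, so `f` is still a representative map of the contracted graph
(`IsRepMap.contract`). Contracting such an edge leaves intact every edge that avoids `v`, so in a
matching the remaining pairs stay edges, and `f` is a representative map of `G'` into `H`
(`IsRepMap.contractSeq`).

A representative map yields a contraction sequence (`IsRepMap.isContractionOf`): while some vertex
`x` lies outside `V(H)`, the first edge `xb` of a path from `x` to `f x` within its fibre can be
contracted onto `b`. When no such `x` is left, `f` is the identity on the vertices and the graph
is `H`.
-/

/-- A finite simple labeled graph: a finite vertex set together with a symmetric,
irreflexive adjacency relation supported on the vertex set.  Two labeled graphs are
equal iff they have the same vertex set and the same edge set. -/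
structure LGraph (α : Type) where
  verts : Finset α
  Adj : α → α → Prop
  symm : ∀ {u v}, Adj u v → Adj v u
  loopless : ∀ u, ¬ Adj u u
  mem_of_adj : ∀ {u v}, Adj u v → u ∈ verts ∧ v ∈ verts

namespace LGraph

variable {α : Type}

/-- Build a labeled graph from a vertex set and an arbitrary relation
(which gets symmetrized, made irreflexive and restricted to the vertex set). -/
def mk' (vs : Finset α) (r : α → α → Prop) : LGraph α where
  verts := vs
  Adj x y := x ≠ y ∧ x ∈ vs ∧ y ∈ vs ∧ (r x y ∨ r y x)
  symm := by
    rintro u v ⟨hne, hu, hv, hr⟩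
    exact ⟨hne.symm, hv, hu, hr.symm⟩
  loopless := by
    rintro u ⟨hne, -⟩
    exact hne rfl
  mem_of_adj := by
    rintro u v ⟨-, hu, hv, -⟩
    exact ⟨hu, hv⟩

variable [DecidableEq α]

/-- The labeled contraction `G/(u,v)`: add an edge between `u` and every vertex of
`N_G(v) \ N_G[u]`, then delete `v` and all its incident edges. -/
def contract (G : LGraph α) (u v : α) : LGraph α where
  verts := G.verts.erase v
  Adj x y := x ≠ y ∧ x ∈ G.verts.erase v ∧ y ∈ G.verts.erase v ∧
    (G.Adj x y ∨ (x = u ∧ G.Adj v y) ∨ (y = u ∧ G.Adj v x))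
  symm := by
    rintro a b ⟨hne, ha, hb, h⟩
    refine ⟨hne.symm, hb, ha, ?_⟩
    rcases h with h | h | h
    · exact Or.inl (G.symm h)
    · exact Or.inr (Or.inr h)
    · exact Or.inr (Or.inl h)
  loopless := by
    rintro a ⟨hne, -⟩
    exact hne rfl
  mem_of_adj := by
    rintro a b ⟨-, ha, hb, -⟩
    exact ⟨ha, hb⟩

/-- The result `G/S` of applying a list of labeled contractions successively. -/
def contractSeq : LGraph α → List (α × α) → LGraph α
  | G, [] => G
  | G, (u, v) :: S => (G.contract u v).contractSeq S

/-- A list of pairs is a valid labeled contraction sequence on `G` if each pair is an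
edge of the current graph when it is contracted. -/
def ValidSeq : LGraph α → List (α × α) → Prop
  | _, [] => True
  | G, (u, v) :: S => G.Adj u v ∧ (G.contract u v).ValidSeq S

/-- `H` is a labeled contraction of `G` if `G/S = H` for some labeled
contraction sequence `S` on `G`. -/
def IsContractionOf (H G : LGraph α) : Prop :=
  ∃ S : List (α × α), G.ValidSeq S ∧ G.contractSeq S = H

/-- Reachability inside a set `W` of vertices, using only edges of `G` with both
endpoints in `W`. -/
def ReachIn (G : LGraph α) (W : Finset α) (x y : α) : Prop :=
  Relation.ReflTransGen (fun a b => a ∈ W ∧ b ∈ W ∧ G.Adj a b) x y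

/-- A witness structure of `G` into `H`: a partition of `V(G)` into `|V(H)|` nonempty
sets, each inducing a connected subgraph of `G` and containing exactly one vertex of
`H` (its representative), such that two distinct vertices `u, v` of `H` are adjacent
in `H` iff the sets containing them are adjacent in `G`. -/
structure IsWitnessStructure (G H : LGraph α) (W : Finset (Finset α)) : Prop where
  subset_verts : ∀ Wi ∈ W, Wi ⊆ G.verts
  nonempty : ∀ Wi ∈ W, Wi.Nonempty
  covers : ∀ x ∈ G.verts, ∃! Wi, Wi ∈ W ∧ x ∈ Wi
  card_eq : W.card = H.verts.card
  connected : ∀ Wi ∈ W, ∀ x ∈ Wi, ∀ y ∈ Wi, G.ReachIn Wi x y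
  unique_rep : ∀ Wi ∈ W, ∃! h, h ∈ H.verts ∧ h ∈ Wi
  adj_iff : ∀ u ∈ H.verts, ∀ v ∈ H.verts, u ≠ v → ∀ Wu ∈ W, ∀ Wv ∈ W,
    u ∈ Wu → v ∈ Wv → (H.Adj u v ↔ ∃ x ∈ Wu, ∃ y ∈ Wv, G.Adj x y)

/-- The degree of `x` inside the induced subgraph on `S`. -/
noncomputable def degreeIn (G : LGraph α) (S : Finset α) (x : α) : ℕ :=
  Set.ncard {y | y ∈ S ∧ G.Adj x y}

/-- `G` is `d`-degenerate: every nonempty (induced) subgraph has a vertex of degree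
at most `d`. -/
def DegenLE (G : LGraph α) (d : ℕ) : Prop :=
  ∀ S : Finset α, S ⊆ G.verts → S.Nonempty → ∃ x ∈ S, G.degreeIn S x ≤ d

/-- The degeneracy `δ(G)`: the smallest `d` such that every nonempty subgraph of `G`
has a vertex of degree at most `d`. -/
noncomputable def degeneracy (G : LGraph α) : ℕ := sInf {d | G.DegenLE d}

/-- The degree of a vertex. -/
noncomputable def degree (G : LGraph α) (x : α) : ℕ := Set.ncard {y | G.Adj x y}

/-- The maximum degree `Δ(G)`. -/
noncomputable def maxDegree (G : LGraph α) : ℕ := G.verts.sup fun x => G.degree x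

/-- The union `G ∪ H`: vertex set `V(G) ∪ V(H)` and edge set `E(G) ∪ E(H)`. -/
def union (G H : LGraph α) : LGraph α where
  verts := G.verts ∪ H.verts
  Adj x y := G.Adj x y ∨ H.Adj x y
  symm := by
    rintro u v (h | h)
    · exact Or.inl (G.symm h)
    · exact Or.inr (H.symm h)
  loopless := by
    rintro u (h | h)
    · exact G.loopless u h
    · exact H.loopless u h
  mem_of_adj := by
    rintro u v (h | h)
    · exact ⟨Finset.mem_union_left _ (G.mem_of_adj h).1,
        Finset.mem_union_left _ (G.mem_of_adj h).2⟩
    · exact ⟨Finset.mem_union_right _ (H.mem_of_adj h).1,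
        Finset.mem_union_right _ (H.mem_of_adj h).2⟩

/-- A tree decomposition of the labeled graph `G`: a tree `T` with a bag
`X_t ⊆ V(G)` for each node `t`, covering all vertices and edges, such that for every
vertex the set of nodes whose bags contain it is connected in `T`. -/
structure TreeDecomp (G : LGraph α) (ι : Type) where
  T : SimpleGraph ι
  isTree : T.IsTree
  bag : ι → Finset α
  bag_subset : ∀ t, bag t ⊆ G.verts
  covers_vert : ∀ x ∈ G.verts, ∃ t, x ∈ bag t
  covers_edge : ∀ {u v}, G.Adj u v → ∃ t, u ∈ bag t ∧ v ∈ bag t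
  coherent : ∀ (x : α) {t₁ t₂ : ι} (p : T.Walk t₁ t₂), p.IsPath →
    x ∈ bag t₁ → x ∈ bag t₂ → ∀ t ∈ p.support, x ∈ bag t

/-- `G` has a tree decomposition of width at most `w`. -/
def TreewidthLE (G : LGraph α) (w : ℕ) : Prop :=
  ∃ (ι : Type) (D : G.TreeDecomp ι), ∀ t, (D.bag t).card ≤ w + 1

/-- The treewidth of `G`: the minimum width of a tree decomposition of `G`. -/
noncomputable def treewidth (G : LGraph α) : ℕ := sInf {w | G.TreewidthLE w}

end LGraph

namespace LGraph

variable {α : Type}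

/-- `f` is the representative map of a witness structure of `G` into `H`: on `V(G)` it is a
retraction onto `V(H)`, its fibres (the witness sets) are connected, and distinct vertices of `H`
are adjacent iff their fibres are. Values of `f` outside `V(G)` are irrelevant. -/
structure IsRepMap (G H : LGraph α) (f : α → α) : Prop where
  verts_subset : H.verts ⊆ G.verts
  map_rep : ∀ h ∈ H.verts, f h = h
  map_mem : ∀ x ∈ G.verts, f x ∈ H.verts
  reach : ∀ x ∈ G.verts, Relation.ReflTransGen (fun a b => G.Adj a b ∧ f a = f b) x (f x)
  adj_iff : ∀ u v, H.Adj u v ↔ u ≠ v ∧ ∃ x y, G.Adj x y ∧ f x = u ∧ f y = v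

theorem ext_of {G H : LGraph α} (hv : G.verts = H.verts)
    (ha : ∀ x y, G.Adj x y ↔ H.Adj x y) : G = H := by
  cases G
  cases H
  obtain rfl := hv
  obtain rfl : _ = _ := funext₂ fun x y => propext (ha x y)
  rfl

theorem IsWitnessStructure.exists_isRepMap {G H : LGraph α} {W : Finset (Finset α)}
    (hW : G.IsWitnessStructure H W) :
    ∃ f, G.IsRepMap H f ∧ ∀ Wi ∈ W, ∀ x ∈ Wi, ∀ y ∈ Wi, f x = f y := by
  have huniq : ∀ {A B : Finset α} {x : α}, A ∈ W → B ∈ W → x ∈ A → x ∈ B → A = B :=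
    fun {A B x} hA hB hxA hxB =>
      (hW.covers x (hW.subset_verts A hA hxA)).unique ⟨hA, hxA⟩ ⟨hB, hxB⟩
  -- `W` and `V(H)` have the same size, so every vertex of `H` represents some witness set.
  have hsurj : ∀ h ∈ H.verts, ∃ Wi ∈ W, h ∈ Wi := fun h hh => by
    obtain ⟨Wi, hWi, hr⟩ := Finset.surj_on_of_inj_on_of_card_le
      (fun Wi hWi => (hW.unique_rep Wi hWi).choose)
      (fun Wi hWi => (hW.unique_rep Wi hWi).choose_spec.1.1)
      (fun A B hA hB hAB => huniq hA hB (hW.unique_rep A hA).choose_spec.1.2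
        (hAB ▸ (hW.unique_rep B hB).choose_spec.1.2)) hW.card_eq.ge h hh
    exact ⟨Wi, hWi, hr ▸ (hW.unique_rep Wi hWi).choose_spec.1.2⟩
  have hex : ∀ x, ∃ r, x ∈ G.verts → r ∈ H.verts ∧ ∃ Wi ∈ W, x ∈ Wi ∧ r ∈ Wi := fun x => by
    by_cases hx : x ∈ G.verts
    · obtain ⟨Wi, ⟨hWi, hxWi⟩, -⟩ := hW.covers x hx
      obtain ⟨r, ⟨hr, hrWi⟩, -⟩ := hW.unique_rep Wi hWi
      exact ⟨r, fun _ => ⟨hr, Wi, hWi, hxWi, hrWi⟩⟩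
    · exact ⟨x, fun h => (hx h).elim⟩
  choose f hf using hex
  have hfmem : ∀ Wi ∈ W, ∀ x ∈ Wi, f x ∈ H.verts ∧ f x ∈ Wi := fun Wi hWi x hx => by
    obtain ⟨h1, A, hA, hxA, hfA⟩ := hf x (hW.subset_verts Wi hWi hx)
    exact ⟨h1, huniq hA hWi hxA hx ▸ hfA⟩
  have hfW : ∀ Wi ∈ W, ∀ x ∈ Wi, ∀ y ∈ Wi, f x = f y := fun Wi hWi x hx y hy =>
    (hW.unique_rep Wi hWi).unique (hfmem Wi hWi x hx) (hfmem Wi hWi y hy)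
  have hfix : ∀ Wi ∈ W, ∀ h ∈ H.verts, h ∈ Wi → f h = h := fun Wi hWi h hh hhWi =>
    (hW.unique_rep Wi hWi).unique (hfmem Wi hWi h hhWi) ⟨hh, hhWi⟩
  refine ⟨f, ⟨fun h hh => ?_, fun h hh => ?_, fun x hx => (hf x hx).1, fun x hx => ?_,
    fun u v => ⟨fun huv => ?_, ?_⟩⟩, hfW⟩
  · obtain ⟨Wi, hWi, hhWi⟩ := hsurj h hh
    exact hW.subset_verts Wi hWi hhWi
  · obtain ⟨Wi, hWi, hhWi⟩ := hsurj h hh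
    exact hfix Wi hWi h hh hhWi
  · obtain ⟨-, Wi, hWi, hxWi, hfWi⟩ := hf x hx
    exact Relation.ReflTransGen.mono
      (fun a b h => ⟨h.2.2, hfW Wi hWi a h.1 b h.2.1⟩) _ _ (hW.connected Wi hWi x hxWi _ hfWi)
  · obtain ⟨hu, hv⟩ := H.mem_of_adj huv
    have hne : u ≠ v := fun h => H.loopless u (by rwa [← h] at huv)
    obtain ⟨A, hA, huA⟩ := hsurj u hu
    obtain ⟨B, hB, hvB⟩ := hsurj v hv
    obtain ⟨x, hx, y, hy, hxy⟩ := (hW.adj_iff u hu v hv hne A hA B hB huA hvB).1 huv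
    exact ⟨hne, x, y, hxy, (hfW A hA x hx u huA).trans (hfix A hA u hu huA),
      (hfW B hB y hy v hvB).trans (hfix B hB v hv hvB)⟩
  · rintro ⟨hne, x, y, hxy, rfl, rfl⟩
    obtain ⟨hx, A, hA, hxA, hfA⟩ := hf x (G.mem_of_adj hxy).1
    obtain ⟨hy, B, hB, hyB, hfB⟩ := hf y (G.mem_of_adj hxy).2
    exact (hW.adj_iff _ hx _ hy hne A hA B hB hfA hfB).2 ⟨x, hxA, y, hyB, hxy⟩

variable [DecidableEq α]

/-- Merging `v` into `u` sends an edge of `G` to an edge of `G/(u,v)`, unless it collapses it. -/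
theorem contract_adj_image {G : LGraph α} {u v a b : α} (huv : G.Adj u v) (hab : G.Adj a b)
    (hne : (if a = v then u else a) ≠ if b = v then u else b) :
    (G.contract u v).Adj (if a = v then u else a) (if b = v then u else b) := by
  have huv' : u ≠ v := fun h => G.loopless u (by rwa [← h] at huv)
  have hu := (G.mem_of_adj huv).1
  have ha := (G.mem_of_adj hab).1
  have hb := (G.mem_of_adj hab).2
  have hba := G.symm hab
  refine ⟨hne, ?_, ?_, ?_⟩
  · split_ifs <;> simp [*]
  · split_ifs <;> simp [*]
  · split_ifs <;> simp_all

theorem contract_adj_of_ne {G : LGraph α} {u v a b : α} (hab : G.Adj a b) (ha : v ≠ a)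
    (hb : v ≠ b) : (G.contract u v).Adj a b :=
  ⟨fun h => G.loopless a (by rwa [← h] at hab),
    Finset.mem_erase.2 ⟨ha.symm, (G.mem_of_adj hab).1⟩,
    Finset.mem_erase.2 ⟨hb.symm, (G.mem_of_adj hab).2⟩, Or.inl hab⟩

theorem IsRepMap.contract {G H : LGraph α} {f : α → α} (hf : G.IsRepMap H f) {u v : α}
    (huv : G.Adj u v) (hfuv : f u = f v) (hv : v ∉ H.verts) :
    (G.contract u v).IsRepMap H f := by
  have hσ : ∀ a, f (if a = v then u else a) = f a := fun a => by
    split_ifs with h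
    · rw [h, hfuv]
    · rfl
  refine ⟨fun h hh => Finset.mem_erase.2 ⟨fun e => hv (e ▸ hh), hf.verts_subset hh⟩,
    hf.map_rep, fun x hx => hf.map_mem x (Finset.mem_of_mem_erase hx), fun x hx => ?_,
    fun a b => ?_⟩
  · -- The image of a path under the merging map is a path with collapsed steps.
    obtain ⟨hxv, hxG⟩ := Finset.mem_erase.1 hx
    have hfx : f x ≠ v := fun e => hv (e ▸ hf.map_mem x hxG)
    have hstep : ∀ a b, G.Adj a b ∧ f a = f b →
        Relation.ReflTransGen (fun a b => (G.contract u v).Adj a b ∧ f a = f b)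
          (if a = v then u else a) (if b = v then u else b) := fun a b ⟨hab, hfab⟩ => by
      by_cases hne : (if a = v then u else a) = if b = v then u else b
      · rw [hne]
      · exact .single ⟨contract_adj_image huv hab hne, by rw [hσ, hσ, hfab]⟩
    have := Relation.ReflTransGen.lift' (fun a => if a = v then u else a) hstep _ _
      (hf.reach x hxG)
    simpa only [Function.onFun, if_neg hxv, if_neg hfx] using this
  · rw [hf.adj_iff]
    refine and_congr_right fun hne => ⟨?_, ?_⟩
    · rintro ⟨x, y, hxy, rfl, rfl⟩
      refine ⟨_, _, contract_adj_image huv hxy fun e => hne ?_, hσ x, hσ y⟩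
      rw [← hσ x, e, hσ]
    · rintro ⟨x, y, ⟨-, -, -, hxy | ⟨rfl, hxy⟩ | ⟨rfl, hxy⟩⟩, rfl, rfl⟩
      · exact ⟨x, y, hxy, rfl, rfl⟩
      · exact ⟨v, y, hxy, hfuv.symm, rfl⟩
      · exact ⟨x, v, G.symm hxy, rfl, hfuv.symm⟩

/-- The pairwise condition says that no pair in the list meets the vertex removed by an earlier
one; this is what keeps the later pairs edges of the current graph. -/
theorem IsRepMap.contractSeq {H : LGraph α} {f : α → α} (L : List (α × α)) {G : LGraph α}
    (hf : G.IsRepMap H f)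
    (hL : ∀ p ∈ L, G.Adj p.1 p.2 ∧ f p.1 = f p.2 ∧ p.2 ∉ H.verts)
    (hpw : L.Pairwise fun p q => p.2 ≠ q.1 ∧ p.2 ≠ q.2) :
    (G.contractSeq L).IsRepMap H f := by
  induction L generalizing G with
  | nil => exact hf
  | cons p L ih =>
    obtain ⟨hp, hpw⟩ := List.pairwise_cons.1 hpw
    obtain ⟨h1, h2, h3⟩ := hL p List.mem_cons_self
    refine ih (hf.contract h1 h2 h3) (fun q hq => ?_) hpw
    obtain ⟨h4, h5⟩ := hL q (List.mem_cons_of_mem _ hq)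
    exact ⟨contract_adj_of_ne h4 (hp q hq).1 (hp q hq).2, h5⟩

theorem IsRepMap.isContractionOf {G H : LGraph α} {f : α → α} (hf : G.IsRepMap H f) :
    H.IsContractionOf G := by
  induction hn : G.verts.card using Nat.strong_induction_on generalizing G with
  | _ n ih =>
    by_cases hsub : G.verts ⊆ H.verts
    · have hfix : ∀ x ∈ G.verts, f x = x := fun x hx => hf.map_rep x (hsub hx)
      refine ⟨[], trivial, ext_of (hsub.antisymm hf.verts_subset) fun x y =>
        ⟨fun h => ?_, fun h => ?_⟩⟩
      · exact (hf.adj_iff x y).2 ⟨fun e => G.loopless x (by rwa [← e] at h), x, y, h,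
          hfix x (G.mem_of_adj h).1, hfix y (G.mem_of_adj h).2⟩
      · obtain ⟨-, a, b, hab, rfl, rfl⟩ := (hf.adj_iff x y).1 h
        rwa [hfix a (G.mem_of_adj hab).1, hfix b (G.mem_of_adj hab).2]
    · obtain ⟨x, hxG, hxH⟩ := Finset.not_subset.1 hsub
      obtain hx | ⟨b, ⟨hxb, hfxb⟩, -⟩ := (hf.reach x hxG).cases_head
      · exact (hxH (hx ▸ hf.map_mem x hxG)).elim
      · have hbx := G.symm hxb
        obtain ⟨S, hS, hSH⟩ := ih _ (hn ▸ Finset.card_erase_lt_of_mem hxG)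
          (hf.contract hbx hfxb.symm hxH) rfl
        exact ⟨(b, x) :: S, ⟨hbx, hS⟩, hSH⟩

end LGraph

/-- Let `H` be a labeled contraction of `G` with witness structure
`W`, and let `R` be a matching of `G` each of whose edges has both endpoints in a
common witness set, oriented so that the removed endpoint of each edge is not a
vertex of `H` (i.e. not a representative).  If `G'` is obtained from `G` by
contracting all edges of `R` (in any order), then `H` is a labeled contraction of
`G'`. -/
theorem isContractionOf_contract_matching {α : Type} [DecidableEq α]
    (G H : LGraph α) (hGH : H.IsContractionOf G)
    (W : Finset (Finset α)) (hW : G.IsWitnessStructure H W)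
    (R : Finset (α × α))
    (hadj : ∀ p ∈ R, G.Adj p.1 p.2)
    (hsame : ∀ p ∈ R, ∃ Wi ∈ W, p.1 ∈ Wi ∧ p.2 ∈ Wi)
    (hkeep : ∀ p ∈ R, p.2 ∉ H.verts)
    (hmatching : ∀ p ∈ R, ∀ q ∈ R, p ≠ q →
      p.1 ≠ q.1 ∧ p.1 ≠ q.2 ∧ p.2 ≠ q.1 ∧ p.2 ≠ q.2)
    (L : List (α × α)) (hnd : L.Nodup) (hLR : L.toFinset = R) :
    H.IsContractionOf (G.contractSeq L) := by
  obtain ⟨f, hf, hfW⟩ := hW.exists_isRepMap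
  have hmem : ∀ p ∈ L, p ∈ R := fun p hp => hLR ▸ List.mem_toFinset.2 hp
  refine (hf.contractSeq L (fun p hp => ?_) ?_).isContractionOf
  · obtain ⟨Wi, hWi, h1, h2⟩ := hsame p (hmem p hp)
    exact ⟨hadj p (hmem p hp), hfW Wi hWi _ h1 _ h2, hkeep p (hmem p hp)⟩
  · refine List.Pairwise.imp_of_mem (fun {p q} hp hq hpq => ?_) hnd
    exact (hmatching p (hmem p hp) q (hmem q hq) hpq).2.2
end

section
/- For every Δ ≥ 2 and every t ≥ 0, there exists a finite graph G of maximum degree Δ and a labeled contraction sequence of length t on G whose resulting graph has maximum degree exactly Δ + t(Δ − 2). -/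
namespace LGraph

/-- The heap-ordered tree described above, after `1, …, k` have been contracted into the root `0`:
a vertex whose parent was among `0, …, k` now hangs below `0`. The root is formally its own parent,
which `mk'` discards. -/
def contractedTree (d t k : ℕ) : LGraph ℕ :=
  mk' (Finset.range ((t + 1) * (d + 1) + 2) \ Finset.Icc 1 k)
    (fun x y => y = if (x - 2) / (d + 1) ≤ k then 0 else (x - 2) / (d + 1))

lemma contractedTree_verts (d t k : ℕ) : (contractedTree d t k).verts =
    Finset.range ((t + 1) * (d + 1) + 2) \ Finset.Icc 1 k := rfl

lemma contractedTree_adj (d t k x y : ℕ) : (contractedTree d t k).Adj x y ↔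
    x ≠ y ∧ (x < (t + 1) * (d + 1) + 2 ∧ ¬ (1 ≤ x ∧ x ≤ k)) ∧
    (y < (t + 1) * (d + 1) + 2 ∧ ¬ (1 ≤ y ∧ y ≤ k)) ∧
    ((y = if (x - 2) / (d + 1) ≤ k then 0 else (x - 2) / (d + 1)) ∨
     (x = if (y - 2) / (d + 1) ≤ k then 0 else (y - 2) / (d + 1))) := by
  simp only [contractedTree, mk', Finset.mem_sdiff, Finset.mem_range, Finset.mem_Icc]

lemma lt_order (d t : ℕ) : t < (t + 1) * (d + 1) := by nlinarith [Nat.zero_le (t * d)]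

lemma parent_le (d k : ℕ) : (k + 1 - 2) / (d + 1) ≤ k :=
  (Nat.div_le_self _ _).trans (by omega)

lemma ext_adj {α : Type} {G H : LGraph α} (hv : G.verts = H.verts)
    (ha : ∀ x y, G.Adj x y ↔ H.Adj x y) : G = H := by
  obtain ⟨v, A, _, _, _⟩ := G
  obtain ⟨w, B, _, _, _⟩ := H
  obtain rfl : v = w := hv
  obtain rfl : A = B := by funext x y; exact propext (ha x y)
  rfl

lemma contractedTree_adj_zero_succ {d t k : ℕ} (hk : k + 1 ≤ t) :
    (contractedTree d t k).Adj 0 (k + 1) := by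
  have h1 := lt_order d t
  rw [contractedTree_adj]
  refine ⟨by omega, by omega, by omega, Or.inr ?_⟩
  rw [if_pos (parent_le d k)]

lemma contractedTree_contract {d t k : ℕ} (hk : k + 1 ≤ t) :
    (contractedTree d t k).contract 0 (k + 1) = contractedTree d t (k + 1) := by
  have h1 := lt_order d t
  have h2 := parent_le d k
  apply ext_adj
  · ext x
    simp only [contract, contractedTree_verts, Finset.mem_erase, Finset.mem_sdiff,
      Finset.mem_range, Finset.mem_Icc]
    omega
  · intro x y
    simp only [contract, contractedTree_verts, Finset.mem_erase, Finset.mem_sdiff,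
      Finset.mem_range, Finset.mem_Icc, contractedTree_adj, if_pos h2]
    generalize (x - 2) / (d + 1) = p
    generalize (y - 2) / (d + 1) = q
    generalize (t + 1) * (d + 1) = N at *
    split_ifs <;> omega

lemma contractedTree_seq (d t n : ℕ) : ∀ k, k + n ≤ t →
    (contractedTree d t k).ValidSeq ((List.range' (k + 1) n).map (Prod.mk 0)) ∧
    (contractedTree d t k).contractSeq ((List.range' (k + 1) n).map (Prod.mk 0)) =
      contractedTree d t (k + n) := by
  induction n with
  | zero => intro k _; exact ⟨trivial, rfl⟩
  | succ n ih =>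
    intro k hk
    obtain ⟨h1, h2⟩ := ih (k + 1) (by omega)
    simp only [List.range'_succ, List.map_cons, ValidSeq, contractSeq]
    rw [contractedTree_contract (by omega)]
    exact ⟨⟨contractedTree_adj_zero_succ (by omega), h1⟩, by rw [h2]; congr 1; omega⟩

lemma maxDegree_eq_of {α : Type} {G : LGraph α} {D : ℕ} {r : α} (hr : r ∈ G.verts)
    (hD : G.degree r = D) (hle : ∀ x ∈ G.verts, G.degree x ≤ D) : G.maxDegree = D :=
  le_antisymm (Finset.sup_le hle) (hD ▸ Finset.le_sup (f := fun x => G.degree x) hr)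

lemma maxDegree_contractedTree_zero (d t : ℕ) : (contractedTree d t 0).maxDegree = d + 2 := by
  have hN : d + 1 ≤ (t + 1) * (d + 1) := by nlinarith [Nat.zero_le (t * (d + 1))]
  have root : (contractedTree d t 0).degree 0 = d + 2 := by
    have : {y | (contractedTree d t 0).Adj 0 y} = ((Finset.Ioo 0 (d + 3) : Finset ℕ) : Set ℕ) := by
      ext y
      have hy : (y - 2) / (d + 1) = 0 ↔ y - 2 < d + 1 := by simp
      simp only [Set.mem_ofPred_eq, contractedTree_adj, Finset.coe_Ioo, Set.mem_Ioo,
        Nat.zero_sub, Nat.zero_div]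
      generalize (y - 2) / (d + 1) = q at *
      split_ifs <;> omega
    rw [degree, this, Set.ncard_coe_finset, Nat.card_Ioo]
    omega
  refine maxDegree_eq_of (r := 0) (by simp [contractedTree_verts]) root fun x _ => ?_
  obtain rfl | hx := Nat.eq_zero_or_pos x
  · exact root.le
  -- A non-root vertex is adjacent only to its parent and to its `d + 1` children.
  have hsub : {y | (contractedTree d t 0).Adj x y} ⊆
      ((insert ((x - 2) / (d + 1))
        (Finset.Ico (x * (d + 1) + 2) (x * (d + 1) + 2 + (d + 1))) : Finset ℕ) : Set ℕ) := by
    intro y hy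
    simp only [Set.mem_ofPred_eq, contractedTree_adj] at hy
    simp only [Finset.coe_insert, Finset.coe_Ico, Set.mem_insert_iff, Set.mem_Ico]
    obtain ⟨-, -, -, h | h⟩ := hy
    · left
      generalize (x - 2) / (d + 1) = p at *
      split_ifs at h <;> omega
    · right
      have h' : (y - 2) / (d + 1) = x := by
        generalize (y - 2) / (d + 1) = q at *
        split_ifs at h <;> omega
      have h3 := Nat.div_add_mod (y - 2) (d + 1)
      have h4 := Nat.mod_lt (y - 2) (Nat.succ_pos d)
      rw [h', mul_comm] at h3
      have h5 : 0 < x * (d + 1) := by positivity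
      simp only [Nat.succ_eq_add_one] at h4
      omega
  calc (contractedTree d t 0).degree x ≤ _ :=
        Set.ncard_le_ncard hsub (Finset.finite_toSet _)
    _ ≤ d + 2 := by
        rw [Set.ncard_coe_finset]
        refine (Finset.card_insert_le _ _).trans ?_
        rw [Nat.card_Ico]; omega

lemma maxDegree_contractedTree_self (d t : ℕ) :
    (contractedTree d t t).maxDegree = d + 2 + t * d := by
  have hN : (t + 1) * (d + 1) + 2 = t + 1 + (d + 2 + t * d) := by ring
  -- Every vertex is `0` or a child of an internal vertex, hence now hangs below `0`.
  have par : ∀ y < (t + 1) * (d + 1) + 2, (y - 2) / (d + 1) ≤ t := by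
    intro y hy
    have h0 : 0 < (t + 1) * (d + 1) := by positivity
    exact Nat.lt_succ_iff.mp ((Nat.div_lt_iff_lt_mul d.succ_pos).mpr (by
      simp only [Nat.succ_eq_add_one]; omega))
  have root : (contractedTree d t t).degree 0 = d + 2 + t * d := by
    have : {y | (contractedTree d t t).Adj 0 y} =
        ((Finset.Ico (t + 1) (t + 1 + (d + 2 + t * d)) : Finset ℕ) : Set ℕ) := by
      ext y
      have := par y
      simp only [Set.mem_ofPred_eq, contractedTree_adj, Finset.coe_Ico, Set.mem_Ico]
      rw [hN] at *
      generalize (y - 2) / (d + 1) = q at *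
      generalize t * d = e at *
      simp only [Nat.zero_sub, Nat.zero_div]
      split_ifs <;> omega
    rw [degree, this, Set.ncard_coe_finset, Nat.card_Ico]
    omega
  refine maxDegree_eq_of (r := 0) (by simp [contractedTree_verts]) root fun x _ => ?_
  obtain rfl | hx := Nat.eq_zero_or_pos x
  · exact root.le
  have hsub : {y | (contractedTree d t t).Adj x y} ⊆ {0} := by
    intro y hy
    simp only [Set.mem_ofPred_eq, contractedTree_adj] at hy
    obtain ⟨-, ⟨hx', -⟩, ⟨hy', -⟩, h⟩ := hy
    rw [if_pos (par x hx'), if_pos (par y hy')] at h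
    exact h.resolve_right hx.ne'
  have := Set.ncard_le_ncard hsub (Set.finite_singleton 0)
  rw [Set.ncard_singleton] at this
  exact this.trans (by omega)

end LGraph

/-- For every `Δ ≥ 2` and every `t ≥ 0` there is a finite graph of
maximum degree `Δ` and a labeled contraction sequence of length `t` on it whose
resulting graph has maximum degree exactly `Δ + t(Δ − 2)`. -/
theorem exists_maxDegree_contractSeq_eq (Δ t : ℕ) (hΔ : 2 ≤ Δ) :
    ∃ (G : LGraph ℕ) (S : List (ℕ × ℕ)),
      G.maxDegree = Δ ∧ G.ValidSeq S ∧ S.length = t ∧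
        (G.contractSeq S).maxDegree = Δ + t * (Δ - 2) := by
  obtain ⟨d, rfl⟩ := Nat.exists_eq_add_of_le' hΔ
  obtain ⟨hS, hres⟩ := LGraph.contractedTree_seq d t t 0 (by omega)
  refine ⟨LGraph.contractedTree d t 0, _, LGraph.maxDegree_contractedTree_zero d t, hS,
    by simp, ?_⟩
  rw [hres, Nat.zero_add, LGraph.maxDegree_contractedTree_self, Nat.add_sub_cancel]
end
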